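/- Let β ≥ 0 or β = -1/2, let n ≥ 1, and 0 < θ₀ < π/2, and suppose α satisfies n·tan²θ₀ < α - β - 1. Then for every θ with θ₀ ≤ θ ≤ π/2, the normalized Jacobi polynomial satisfies |p_n^{(α,β)}(cos 2θ)| ≤ (Γ(α+1)/Γ(α-β)) · (cos θ₀)^{2n} / (α - β - 1 - n·tan²θ₀)^{β+1}. -/

import Mathlib

/-!
Put `x = cos² θ`. Bateman's fractional integral represents `p_n^{(α,β)}` as the mean of the
homogenised ultraspherical form `p_n^{(β,β)}(x, s(1 - x))` against the Beta weight
`s^β (1 - s)^(α-β-1)` on `[0, 1]`. Sonin's argument, applied to the hypergeometric differential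
equation, bounds `p_n^{(β,β)}` on `[0, 1]` by its endpoint values, which are `±1`; hence the form is
at most `(x + s(1 - x))^n`. For `x ≤ cos² θ₀` this is at most
`(cos θ₀)^(2n) exp(n s tan² θ₀)`, and `1 - s ≤ exp(-s)` turns the remaining integral into Euler's
integral for `Γ(β+1)`.
-/

/-- The normalized Jacobi polynomial `p_n^{(α,β)}` evaluated at `cos 2θ`, via its
explicit expansion in powers of `cos²θ` and `sin²θ`. -/
noncomputable def pJacobiCos (α β : ℝ) (n : ℕ) (θ : ℝ) : ℝ :=
  ∑ m ∈ Finset.range (n + 1),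
    (-1 : ℝ) ^ (n - m) * (n.choose m) *
      (Real.Gamma (β + n + 1) / Real.Gamma (β + m + 1)) *
      (Real.Gamma (α + 1) / Real.Gamma (α + ((n : ℝ) - m) + 1)) *
      (Real.cos θ ^ 2) ^ m * (Real.sin θ ^ 2) ^ (n - m)

section

open Real MeasureTheory
open Finset.HasAntidiagonal (antidiagonal mem_antidiagonal)
open Polynomial (C X derivative)
open scoped Polynomial

/-- The coefficient of `x ^ i * y ^ k` in the homogeneous Jacobi form of degree `i + k`. Indexing by
both exponents, instead of by the degree and one exponent, avoids truncated subtraction. -/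
noncomputable def jacobiCoeff (α β : ℝ) (i k : ℕ) : ℝ :=
  (-1) ^ k * (i + k).choose i * (Gamma (β + i + k + 1) / Gamma (β + i + 1)) *
    (Gamma (α + 1) / Gamma (α + k + 1))

/-- The normalized Jacobi polynomial as a homogeneous form of degree `n` in `x = cos² θ` and
`y = sin² θ`, regarded as independent variables. -/
noncomputable def jacobiForm (α β : ℝ) (n : ℕ) (x y : ℝ) : ℝ :=
  ∑ p ∈ antidiagonal n, jacobiCoeff α β p.1 p.2 * (x ^ p.1 * y ^ p.2)

/-- The normalized Jacobi polynomial as a polynomial in `X = cos² θ`, that is, in the variable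
`(1 + cos 2θ) / 2`; it is used to state the differential equation. -/
noncomputable def jacobiPoly (α β : ℝ) (n : ℕ) : ℝ[X] :=
  ∑ p ∈ antidiagonal n, C (jacobiCoeff α β p.1 p.2) * (X ^ p.1 * (1 - X) ^ p.2)

theorem pJacobiCos_eq_jacobiForm (α β : ℝ) (n : ℕ) (θ : ℝ) :
    pJacobiCos α β n θ = jacobiForm α β n (cos θ ^ 2) (sin θ ^ 2) := by
  rw [jacobiForm, Finset.Nat.sum_antidiagonal_eq_sum_range_succ
    (fun i k ↦ jacobiCoeff α β i k * ((cos θ ^ 2) ^ i * (sin θ ^ 2) ^ k)), pJacobiCos]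
  refine Finset.sum_congr rfl fun m hm ↦ ?_
  have hmn : m ≤ n := Finset.mem_range_succ_iff.mp hm
  rw [jacobiCoeff, Nat.add_sub_cancel' hmn, Nat.cast_sub hmn,
    show β + m + (n - m : ℝ) + 1 = β + n + 1 by ring]
  ring

theorem eval_jacobiPoly (α β : ℝ) (n : ℕ) (v : ℝ) :
    (jacobiPoly α β n).eval v = jacobiForm α β n v (1 - v) := by
  simp [jacobiPoly, jacobiForm, Polynomial.eval_finsetSum]

theorem jacobiForm_mul_mul (α β : ℝ) (n : ℕ) (r x y : ℝ) :
    jacobiForm α β n (r * x) (r * y) = r ^ n * jacobiForm α β n x y := by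
  simp only [jacobiForm, Finset.mul_sum]
  refine Finset.sum_congr rfl fun p hp ↦ ?_
  rw [← mem_antidiagonal.mp hp]
  ring

theorem jacobiForm_zero_right (α β : ℝ) (n : ℕ) (x : ℝ) :
    jacobiForm α β n x 0 = jacobiCoeff α β n 0 * x ^ n := by
  cases n with
  | zero => simp [jacobiForm]
  | succ n => simp [jacobiForm, Finset.Nat.sum_antidiagonal_succ']

theorem jacobiForm_zero_left (α β : ℝ) (n : ℕ) (y : ℝ) :
    jacobiForm α β n 0 y = jacobiCoeff α β 0 n * y ^ n := by
  cases n with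
  | zero => simp [jacobiForm]
  | succ n => simp [jacobiForm, Finset.Nat.sum_antidiagonal_succ]

theorem Gamma_add_natCast_add_one_ne_zero {a : ℝ} (ha : -1 < a) (n : ℕ) :
    Gamma (a + n + 1) ≠ 0 :=
  (Gamma_pos_of_pos (by linarith [n.cast_nonneg (α := ℝ)])).ne'

theorem jacobiCoeff_zero_right {α β : ℝ} (hα : -1 < α) (hβ : -1 < β) (n : ℕ) :
    jacobiCoeff α β n 0 = 1 := by
  have hΓα : Gamma (α + 1) ≠ 0 := by simpa using Gamma_add_natCast_add_one_ne_zero hα 0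
  simp [jacobiCoeff, hΓα, Gamma_add_natCast_add_one_ne_zero hβ n]

theorem abs_jacobiCoeff_self_zero_left {β : ℝ} (hβ : -1 < β) (n : ℕ) :
    |jacobiCoeff β β 0 n| = 1 := by
  have hΓ₀ : Gamma (β + 1) ≠ 0 := by simpa using Gamma_add_natCast_add_one_ne_zero hβ 0
  have hΓn := Gamma_add_natCast_add_one_ne_zero hβ n
  have hcoeff : jacobiCoeff β β 0 n = (-1) ^ n := by
    simp only [jacobiCoeff, zero_add, Nat.choose_zero_right, Nat.cast_one, Nat.cast_zero, add_zero]
    field_simp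
  rw [hcoeff, abs_neg_one_pow]

theorem jacobiCoeff_succ_add_jacobiCoeff_succ {α β : ℝ} (hα : -1 < α) (hβ : -1 < β) (i k : ℕ) :
    (i + 1) * (i + 1 + β) * jacobiCoeff α β (i + 1) k +
      (k + 1) * (k + 1 + α) * jacobiCoeff α β i (k + 1) = 0 := by
  have hchoose : ((i + k + 1).choose (i + 1) : ℝ) * (i + 1) = (i + k + 1).choose i * (k + 1) := by
    have h := Nat.choose_succ_right_eq (i + k + 1) i
    rw [show i + k + 1 - i = k + 1 by omega] at h
    exact_mod_cast h
  have hi : 0 < β + i + 1 := by linarith [i.cast_nonneg (α := ℝ)]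
  have hk : 0 < α + k + 1 := by linarith [k.cast_nonneg (α := ℝ)]
  have hΓi := Gamma_add_natCast_add_one_ne_zero hβ i
  have hΓk := Gamma_add_natCast_add_one_ne_zero hα k
  have hΓi' : Gamma (β + (i + 1) + 1) = (β + i + 1) * Gamma (β + i + 1) := by
    rw [← add_assoc, Gamma_add_one hi.ne']
  have hΓk' : Gamma (α + (k + 1) + 1) = (α + k + 1) * Gamma (α + k + 1) := by
    rw [← add_assoc, Gamma_add_one hk.ne']
  simp only [jacobiCoeff, Nat.cast_add, Nat.cast_one, hΓi', hΓk']
  rw [show i + 1 + k = i + k + 1 by ring, show i + (k + 1) = i + k + 1 by ring,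
    show β + (i + 1 : ℝ) + k + 1 = β + i + (k + 1) + 1 by ring,
    show (i + 1 + β : ℝ) = β + i + 1 by ring, show (k + 1 + α : ℝ) = α + k + 1 by ring, pow_succ]
  field_simp
  linear_combination Gamma (β + i + (k + 1) + 1) * Gamma (α + 1) * (-1) ^ k * hchoose

theorem derivative_X_pow_mul_one_sub_X_pow {R : Type*} [CommRing R] (i k : ℕ) :
    derivative (X ^ i * (1 - X) ^ k : R[X]) =
      (i : R[X]) * (X ^ (i - 1) * (1 - X) ^ k) - (k : R[X]) * (X ^ i * (1 - X) ^ (k - 1)) := by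
  simp only [Polynomial.derivative_mul, Polynomial.derivative_pow,
    Polynomial.derivative_sub, Polynomial.derivative_one, Polynomial.derivative_X, map_natCast]
  ring

theorem hypergeometric_X_pow_mul_one_sub_X_pow {R : Type*} [CommRing R] (α β : R) (i k : ℕ) :
    X * (1 - X) * derivative (derivative (X ^ i * (1 - X) ^ k)) +
        (C (β + 1) - C (α + β + 2) * X) * derivative (X ^ i * (1 - X) ^ k) +
        C ((i + k) * (i + k + α + β + 1)) * (X ^ i * (1 - X) ^ k) =
      C (i * (i + β)) * (X ^ (i - 1) * (1 - X) ^ k) +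
        C (k * (k + α)) * (X ^ i * (1 - X) ^ (k - 1)) := by
  have hX : (i : R[X]) * (X * X ^ (i - 1)) = (i : R[X]) * X ^ i := by
    cases i <;> simp [pow_succ']
  have hX' : (k : R[X]) * ((1 - X) * (1 - X) ^ (k - 1)) = (k : R[X]) * (1 - X) ^ k := by
    cases k <;> simp [pow_succ']
  have hq' := derivative_X_pow_mul_one_sub_X_pow (R := R) i k
  set q : R[X] := X ^ i * (1 - X) ^ k
  -- The monomial satisfies a first-order equation, and differentiating it eliminates the second
  -- derivative of `q`.
  have hfirst : X * (1 - X) * derivative q = ((i : R[X]) - ((i : R[X]) + (k : R[X])) * X) * q := by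
    rw [hq']
    linear_combination (1 - X) * (1 - X) ^ k * hX - X * X ^ i * hX'
  have hsecond := congrArg derivative hfirst
  simp only [Polynomial.derivative_mul, Polynomial.derivative_sub, Polynomial.derivative_add,
    Polynomial.derivative_one, Polynomial.derivative_X, Polynomial.derivative_natCast] at hsecond
  simp only [map_add, map_mul, map_natCast, map_one, map_ofNat]
  linear_combination hsecond +
    ((i : R[X]) + C β - ((i : R[X]) + (k : R[X]) + C α + C β) * X) * hq' -
    ((i : R[X]) + (k : R[X]) + C α + C β) * ((1 - X) ^ k * hX + X ^ i * hX')

theorem hypergeometric_jacobiPoly {α β : ℝ} (hα : -1 < α) (hβ : -1 < β) (n : ℕ) :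
    X * (1 - X) * derivative (derivative (jacobiPoly α β n)) +
        (C (β + 1) - C (α + β + 2) * X) * derivative (jacobiPoly α β n) +
        C (n * (n + α + β + 1)) * jacobiPoly α β n = 0 := by
  have hterms :
      X * (1 - X) * derivative (derivative (jacobiPoly α β n)) +
          (C (β + 1) - C (α + β + 2) * X) * derivative (jacobiPoly α β n) +
          C (n * (n + α + β + 1)) * jacobiPoly α β n =
        ∑ p ∈ antidiagonal n, C (jacobiCoeff α β p.1 p.2) *
          (C (p.1 * (p.1 + β)) * (X ^ (p.1 - 1) * (1 - X) ^ p.2)) +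
        ∑ p ∈ antidiagonal n, C (jacobiCoeff α β p.1 p.2) *
          (C (p.2 * (p.2 + α)) * (X ^ p.1 * (1 - X) ^ (p.2 - 1))) := by
    simp only [jacobiPoly, map_sum, Polynomial.derivative_C_mul, Finset.mul_sum,
      ← Finset.sum_add_distrib]
    refine Finset.sum_congr rfl fun p hp ↦ ?_
    rw [← mem_antidiagonal.mp hp, Nat.cast_add]
    linear_combination C (jacobiCoeff α β p.1 p.2) *
      hypergeometric_X_pow_mul_one_sub_X_pow α β p.1 p.2
  rw [hterms]
  cases n with
  | zero => simp
  | succ n =>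
    rw [Finset.Nat.sum_antidiagonal_succ, Finset.Nat.sum_antidiagonal_succ']
    simp only [Nat.cast_zero, zero_mul, map_zero, mul_zero, zero_add, ← Finset.sum_add_distrib]
    refine Finset.sum_eq_zero fun p _ ↦ ?_
    have hrec := congrArg C (jacobiCoeff_succ_add_jacobiCoeff_succ hα hβ p.1 p.2)
    simp only [map_add, map_mul, map_natCast, map_one, map_zero, Nat.cast_add, Nat.cast_one,
      Nat.add_sub_cancel] at hrec ⊢
    linear_combination X ^ p.1 * (1 - X) ^ p.2 * hrec

/-- The Sonin function `N p² + X (1 - X) p'²` of a polynomial solution `p` of the hypergeometric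
equation `X (1 - X) p'' + (b - a X) p' + N p = 0`. Over `ℝ`, it dominates `N p²` on `[0, 1]`
and agrees with it at both endpoints. -/
noncomputable def soninPoly {R : Type*} [CommRing R] (N : R) (p : R[X]) : R[X] :=
  C N * p ^ 2 + X * (1 - X) * derivative p ^ 2

theorem derivative_soninPoly {R : Type*} [CommRing R] {a b N : R} {p : R[X]}
    (hp : X * (1 - X) * derivative (derivative p) + (C b - C a * X) * derivative p + C N * p = 0) :
    derivative (soninPoly N p) = (C (2 * a - 2) * X - C (2 * b - 1)) * derivative p ^ 2 := by
  simp only [soninPoly, map_add, map_sub, map_mul, map_ofNat, map_one, Polynomial.derivative_mul,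
    Polynomial.derivative_pow, Polynomial.derivative_C, Polynomial.derivative_X,
    Polynomial.derivative_one, Nat.cast_ofNat]
  linear_combination 2 * derivative p * hp

theorem eval_le_max_of_derivative_eq_affine_mul_sq {P q : ℝ[X]} {c d : ℝ} (hc : 0 ≤ c)
    (hP : derivative P = (C c * X - C d) * q ^ 2) {v : ℝ} (hv : v ∈ Set.Icc 0 1) :
    P.eval v ≤ max (P.eval 0) (P.eval 1) := by
  have hderiv (x : ℝ) : deriv (fun u ↦ P.eval u) x = (c * x - d) * q.eval x ^ 2 := by
    simp [hP]
  rcases le_total (c * v) d with h | h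
  · refine le_max_of_le_left ?_
    have hanti : AntitoneOn (fun u ↦ P.eval u) (Set.Icc 0 v) := by
      refine antitoneOn_of_deriv_nonpos (convex_Icc 0 v) P.continuousOn
        P.differentiable.differentiableOn fun x hx ↦ ?_
      rw [interior_Icc] at hx
      rw [hderiv]
      have : c * x ≤ c * v := mul_le_mul_of_nonneg_left hx.2.le hc
      exact mul_nonpos_of_nonpos_of_nonneg (by linarith) (sq_nonneg _)
    exact hanti (Set.left_mem_Icc.mpr hv.1) (Set.right_mem_Icc.mpr hv.1) hv.1
  · refine le_max_of_le_right ?_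
    have hmono : MonotoneOn (fun u ↦ P.eval u) (Set.Icc v 1) := by
      refine monotoneOn_of_deriv_nonneg (convex_Icc v 1) P.continuousOn
        P.differentiable.differentiableOn fun x hx ↦ ?_
      rw [interior_Icc] at hx
      rw [hderiv]
      have : c * v ≤ c * x := mul_le_mul_of_nonneg_left hx.1.le hc
      exact mul_nonneg (by linarith) (sq_nonneg _)
    exact hmono (Set.left_mem_Icc.mpr hv.2) (Set.right_mem_Icc.mpr hv.2) hv.2

theorem abs_eval_le_max_of_hypergeometric {a b N : ℝ} (ha : 1 ≤ a) (hN : 0 < N) {p : ℝ[X]}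
    (hp : X * (1 - X) * derivative (derivative p) + (C b - C a * X) * derivative p + C N * p = 0)
    {v : ℝ} (hv : v ∈ Set.Icc 0 1) :
    |p.eval v| ≤ max |p.eval 0| |p.eval 1| := by
  have hsonin : (soninPoly N p).eval v ≤ max ((soninPoly N p).eval 0) ((soninPoly N p).eval 1) :=
    eval_le_max_of_derivative_eq_affine_mul_sq (by linarith) (derivative_soninPoly hp) hv
  have hdom : 0 ≤ v * (1 - v) * (derivative p).eval v ^ 2 :=
    mul_nonneg (mul_nonneg hv.1 (sub_nonneg.mpr hv.2)) (sq_nonneg _)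
  simp only [soninPoly, Polynomial.eval_add, Polynomial.eval_mul, Polynomial.eval_C,
    Polynomial.eval_pow, Polynomial.eval_X, Polynomial.eval_sub, Polynomial.eval_one, sub_self,
    mul_zero, zero_mul, add_zero] at hsonin
  rcases le_max_iff.mp hsonin with h | h
  · exact le_max_of_le_left (sq_le_sq.mp (le_of_mul_le_mul_left (by linarith) hN))
  · exact le_max_of_le_right (sq_le_sq.mp (le_of_mul_le_mul_left (by linarith) hN))

theorem abs_jacobiForm_one_sub_le_max {α β : ℝ} (hα : -1 < α) (hβ : -1 < β) (hαβ : -1 ≤ α + β)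
    (n : ℕ) {v : ℝ} (hv : v ∈ Set.Icc 0 1) :
    |jacobiForm α β n v (1 - v)| ≤ max |jacobiForm α β n 0 1| |jacobiForm α β n 1 0| := by
  rcases n.eq_zero_or_pos with rfl | hn
  · simp [jacobiForm]
  · have hn' : (0 : ℝ) < n := Nat.cast_pos.mpr hn
    have h := abs_eval_le_max_of_hypergeometric (by linarith)
      (mul_pos hn' (by linarith)) (hypergeometric_jacobiPoly hα hβ n) hv
    simpa only [eval_jacobiPoly, sub_zero, sub_self] using h

theorem abs_jacobiForm_self_le {β : ℝ} (hβ : -(1 / 2) ≤ β) (n : ℕ) {x y : ℝ} (hx : 0 ≤ x)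
    (hy : 0 ≤ y) : |jacobiForm β β n x y| ≤ (x + y) ^ n := by
  have hβ' : -1 < β := by linarith
  have hxy : 0 ≤ x + y := add_nonneg hx hy
  set v := x / (x + y)
  have hv : v ∈ Set.Icc 0 1 := ⟨div_nonneg hx hxy, div_le_one_of_le₀ (by linarith) hxy⟩
  have hxv : (x + y) * v = x := mul_div_cancel_of_imp' fun h ↦ by linarith
  have hyv : (x + y) * (1 - v) = y := by linarith
  have hunit : |jacobiForm β β n v (1 - v)| ≤ 1 := by
    refine (abs_jacobiForm_one_sub_le_max hβ' hβ' (by linarith) n hv).trans_eq ?_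
    simp [jacobiForm_zero_left, jacobiForm_zero_right, jacobiCoeff_zero_right hβ' hβ',
      abs_jacobiCoeff_self_zero_left hβ']
  calc |jacobiForm β β n x y|
      = |jacobiForm β β n ((x + y) * v) ((x + y) * (1 - v))| := by rw [hxv, hyv]
    _ = (x + y) ^ n * |jacobiForm β β n v (1 - v)| := by
        rw [jacobiForm_mul_mul, abs_mul, abs_of_nonneg (pow_nonneg hxy n)]
    _ ≤ (x + y) ^ n := mul_le_of_le_one_right (pow_nonneg hxy n) hunit

theorem re_ofReal_cpow_mul_one_sub_cpow (a b : ℝ) {s : ℝ} (hs : s ∈ Set.Icc 0 1) :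
    ((s : ℂ) ^ (a - 1 : ℂ) * (1 - s : ℂ) ^ (b - 1 : ℂ)).re = s ^ (a - 1) * (1 - s) ^ (b - 1) := by
  have h := congrArg₂ (· * ·) (Complex.ofReal_cpow hs.1 (a - 1))
    (Complex.ofReal_cpow (sub_nonneg.mpr hs.2) (b - 1))
  push_cast at h
  rw [← h]
  norm_cast

theorem intervalIntegrable_rpow_mul_one_sub_rpow {a b : ℝ} (ha : 0 < a) (hb : 0 < b) :
    IntervalIntegrable (fun s : ℝ ↦ s ^ (a - 1) * (1 - s) ^ (b - 1)) volume 0 1 := by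
  have h := Complex.betaIntegral_convergent (u := a) (v := b) (by simpa) (by simpa)
  rw [intervalIntegrable_iff_integrableOn_Ioc_of_le zero_le_one] at h ⊢
  exact (integrableOn_congr_fun (fun s hs ↦ re_ofReal_cpow_mul_one_sub_cpow a b
    (Set.Ioc_subset_Icc_self hs)) measurableSet_Ioc).mp h.re

theorem integral_rpow_mul_one_sub_rpow {a b : ℝ} (ha : 0 < a) (hb : 0 < b) :
    ∫ s in (0 : ℝ)..1, s ^ (a - 1) * (1 - s) ^ (b - 1) = Gamma a * Gamma b / Gamma (a + b) := by
  have h := Complex.betaIntegral_convergent (u := a) (v := b) (by simpa) (by simpa)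
  rw [intervalIntegrable_iff_integrableOn_Ioc_of_le zero_le_one] at h
  have hbeta := ProbabilityTheory.beta_eq_betaIntegralReal a b ha hb
  rw [ProbabilityTheory.beta, Complex.betaIntegral,
    intervalIntegral.integral_of_le zero_le_one, ← RCLike.re_to_complex, ← integral_re h] at hbeta
  rw [hbeta, intervalIntegral.integral_of_le zero_le_one]
  exact setIntegral_congr_fun measurableSet_Ioc fun s hs ↦
    (re_ofReal_cpow_mul_one_sub_cpow a b (Set.Ioc_subset_Icc_self hs)).symm

theorem eqOn_pow_mul_rpow_mul_one_sub_rpow (γ δ : ℝ) (k : ℕ) :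
    Set.EqOn (fun s : ℝ ↦ s ^ (γ + k + 1 - 1) * (1 - s) ^ (δ - 1))
      (fun s ↦ s ^ k * (s ^ γ * (1 - s) ^ (δ - 1))) (Set.Ioc 0 1) := by
  intro s hs
  simp only [add_sub_cancel_right, rpow_add hs.1, rpow_natCast]
  ring

theorem intervalIntegrable_pow_mul_rpow_mul_one_sub_rpow {γ δ : ℝ} (hγ : -1 < γ) (hδ : 0 < δ)
    (k : ℕ) :
    IntervalIntegrable (fun s : ℝ ↦ s ^ k * (s ^ γ * (1 - s) ^ (δ - 1))) volume 0 1 := by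
  have hk : 0 < γ + k + 1 := by linarith [k.cast_nonneg (α := ℝ)]
  refine (intervalIntegrable_rpow_mul_one_sub_rpow hk hδ).congr ?_
  rw [Set.uIoc_of_le zero_le_one]
  exact eqOn_pow_mul_rpow_mul_one_sub_rpow γ δ k

theorem integral_pow_mul_rpow_mul_one_sub_rpow {γ δ : ℝ} (hγ : -1 < γ) (hδ : 0 < δ) (k : ℕ) :
    ∫ s in (0 : ℝ)..1, s ^ k * (s ^ γ * (1 - s) ^ (δ - 1)) =
      Gamma (γ + k + 1) * Gamma δ / Gamma (γ + δ + k + 1) := by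
  have hk : 0 < γ + k + 1 := by linarith [k.cast_nonneg (α := ℝ)]
  rw [show γ + δ + k + 1 = γ + k + 1 + δ by ring, ← integral_rpow_mul_one_sub_rpow hk hδ,
    intervalIntegral.integral_of_le zero_le_one, intervalIntegral.integral_of_le zero_le_one]
  exact (setIntegral_congr_fun measurableSet_Ioc
    (eqOn_pow_mul_rpow_mul_one_sub_rpow γ δ k)).symm

theorem jacobiForm_eq_integral_jacobiForm {α γ : ℝ} (hγ : -1 < γ) (hγα : γ < α) (β : ℝ) (n : ℕ)
    (x y : ℝ) :
    jacobiForm α β n x y = Gamma (α + 1) / (Gamma (α - γ) * Gamma (γ + 1)) *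
      ∫ s in (0 : ℝ)..1, jacobiForm γ β n x (s * y) * (s ^ γ * (1 - s) ^ (α - γ - 1)) := by
  have hδ : 0 < α - γ := sub_pos.mpr hγα
  have hexpand (s : ℝ) :
      jacobiForm γ β n x (s * y) * (s ^ γ * (1 - s) ^ (α - γ - 1)) =
        ∑ p ∈ antidiagonal n, jacobiCoeff γ β p.1 p.2 * (x ^ p.1 * y ^ p.2) *
          (s ^ p.2 * (s ^ γ * (1 - s) ^ (α - γ - 1))) := by
    rw [jacobiForm, Finset.sum_mul]
    exact Finset.sum_congr rfl fun p _ ↦ by ring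
  simp only [hexpand]
  rw [intervalIntegral.integral_finsetSum fun p _ ↦
    (intervalIntegrable_pow_mul_rpow_mul_one_sub_rpow hγ hδ p.2).const_mul _,
    Finset.mul_sum, jacobiForm]
  refine Finset.sum_congr rfl fun p _ ↦ ?_
  rw [intervalIntegral.integral_const_mul, integral_pow_mul_rpow_mul_one_sub_rpow hγ hδ,
    show γ + (α - γ) + p.2 + 1 = α + p.2 + 1 by ring, jacobiCoeff, jacobiCoeff]
  have hΓδ : Gamma (α - γ) ≠ 0 := (Gamma_pos_of_pos hδ).ne'
  have hΓγ : Gamma (γ + 1) ≠ 0 := by simpa using Gamma_add_natCast_add_one_ne_zero hγ 0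
  have hΓγk := Gamma_add_natCast_add_one_ne_zero hγ p.2
  field_simp

theorem one_sub_rpow_le_exp_neg_mul {δ s : ℝ} (hδ : 0 ≤ δ) (hs : s ≤ 1) :
    (1 - s) ^ δ ≤ exp (-(δ * s)) :=
  calc (1 - s) ^ δ ≤ exp (-s) ^ δ :=
        rpow_le_rpow (sub_nonneg.mpr hs) (one_sub_le_exp_neg s) hδ
    _ = exp (-(δ * s)) := by rw [← exp_mul]; ring_nf

theorem integrableOn_rpow_mul_exp_neg_mul {γ r : ℝ} (hγ : -1 < γ) (hr : 0 < r) :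
    IntegrableOn (fun s : ℝ ↦ s ^ γ * exp (-(r * s))) (Set.Ioi 0) := by
  simpa using integrableOn_rpow_mul_exp_neg_mul_rpow hγ one_pos hr

theorem integral_rpow_mul_exp_neg_mul_le {γ r : ℝ} (hγ : -1 < γ) (hr : 0 < r) :
    ∫ s in (0 : ℝ)..1, s ^ γ * exp (-(r * s)) ≤ Gamma (γ + 1) / r ^ (γ + 1) := by
  have heuler := integral_rpow_mul_exp_neg_mul_Ioi (neg_lt_iff_pos_add.mp hγ) hr
  rw [add_sub_cancel_right, one_div, inv_rpow hr.le, inv_mul_eq_div] at heuler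
  rw [← heuler, intervalIntegral.integral_of_le zero_le_one]
  refine setIntegral_mono_set (integrableOn_rpow_mul_exp_neg_mul hγ hr) ?_
    Set.Ioc_subset_Ioi_self.eventuallyLE
  exact ae_restrict_of_forall_mem measurableSet_Ioi fun s hs ↦
    mul_nonneg (rpow_nonneg (le_of_lt hs) _) (exp_nonneg _)

theorem abs_integral_mul_rpow_mul_one_sub_rpow_le {F : ℝ → ℝ} {M c γ δ : ℝ} (hγ : -1 < γ)
    (hδ : 0 ≤ δ) (hc : c < δ) (hF : ∀ s ∈ Set.Ioc 0 1, |F s| ≤ M * exp (c * s)) :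
    |∫ s in (0 : ℝ)..1, F s * (s ^ γ * (1 - s) ^ δ)| ≤
      M * (Gamma (γ + 1) / (δ - c) ^ (γ + 1)) := by
  have hr : 0 < δ - c := sub_pos.mpr hc
  have hM : 0 ≤ M :=
    nonneg_of_mul_nonneg_left ((abs_nonneg _).trans (hF 1 ⟨one_pos, le_rfl⟩)) (exp_pos _)
  have hpoint : ∀ s ∈ Set.Ioc (0 : ℝ) 1,
      ‖F s * (s ^ γ * (1 - s) ^ δ)‖ ≤ M * (s ^ γ * exp (-((δ - c) * s))) := by
    intro s hs
    have hsγ : 0 ≤ s ^ γ := rpow_nonneg hs.1.le γ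
    have hsδ : 0 ≤ (1 - s) ^ δ := rpow_nonneg (sub_nonneg.mpr hs.2) δ
    calc ‖F s * (s ^ γ * (1 - s) ^ δ)‖ = |F s| * (s ^ γ * (1 - s) ^ δ) := by
          rw [norm_eq_abs, abs_mul, abs_of_nonneg (mul_nonneg hsγ hsδ)]
      _ ≤ M * exp (c * s) * (s ^ γ * exp (-(δ * s))) := by
          gcongr
          · exact hF s hs
          · exact one_sub_rpow_le_exp_neg_mul hδ hs.2
      _ = M * (s ^ γ * exp (-((δ - c) * s))) := by
          rw [show -((δ - c) * s) = c * s + -(δ * s) by ring, exp_add]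
          ring
  have hint : IntervalIntegrable (fun s : ℝ ↦ s ^ γ * exp (-((δ - c) * s))) volume 0 1 :=
    (intervalIntegrable_iff_integrableOn_Ioc_of_le zero_le_one).mpr
      ((integrableOn_rpow_mul_exp_neg_mul hγ hr).mono_set Set.Ioc_subset_Ioi_self)
  calc |∫ s in (0 : ℝ)..1, F s * (s ^ γ * (1 - s) ^ δ)|
      ≤ ∫ s in (0 : ℝ)..1, M * (s ^ γ * exp (-((δ - c) * s))) :=
        intervalIntegral.norm_integral_le_of_norm_le zero_le_one (.of_forall hpoint)
          (hint.const_mul M)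
    _ = M * ∫ s in (0 : ℝ)..1, s ^ γ * exp (-((δ - c) * s)) :=
        intervalIntegral.integral_const_mul M _
    _ ≤ M * (Gamma (γ + 1) / (δ - c) ^ (γ + 1)) :=
        mul_le_mul_of_nonneg_left (integral_rpow_mul_exp_neg_mul_le hγ hr) hM

theorem add_mul_one_sub_le_inv_mul_exp {x t s : ℝ} (ht : 0 ≤ t) (hx : x ≤ (1 + t)⁻¹)
    (hs : s ≤ 1) : x + s * (1 - x) ≤ (1 + t)⁻¹ * exp (t * s) := by
  calc x + s * (1 - x) = s + (1 - s) * x := by ring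
    _ ≤ s + (1 - s) * (1 + t)⁻¹ := by gcongr
    _ = (1 + t)⁻¹ * (t * s + 1) := by
        field_simp
        ring
    _ ≤ (1 + t)⁻¹ * exp (t * s) := by
        gcongr
        exact add_one_le_exp _

theorem abs_jacobiForm_one_sub_le {α β : ℝ} (hβ : -(1 / 2) ≤ β) {n : ℕ} {t x : ℝ} (ht : 0 ≤ t)
    (hα : n * t < α - β - 1) (hx : 0 ≤ x) (hxt : x ≤ (1 + t)⁻¹) :
    |jacobiForm α β n x (1 - x)| ≤
      Gamma (α + 1) / Gamma (α - β) * (1 + t)⁻¹ ^ n / (α - β - 1 - n * t) ^ (β + 1) := by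
  have hnt : 0 ≤ n * t := by positivity
  have hx1 : x ≤ 1 := hxt.trans (inv_le_one_of_one_le₀ (by linarith))
  have hform : ∀ s ∈ Set.Ioc (0 : ℝ) 1,
      |jacobiForm β β n x (s * (1 - x))| ≤ (1 + t)⁻¹ ^ n * exp (n * t * s) := by
    intro s hs
    have hy : 0 ≤ s * (1 - x) := mul_nonneg hs.1.le (sub_nonneg.mpr hx1)
    calc |jacobiForm β β n x (s * (1 - x))| ≤ (x + s * (1 - x)) ^ n :=
          abs_jacobiForm_self_le hβ n hx hy
      _ ≤ ((1 + t)⁻¹ * exp (t * s)) ^ n :=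
          pow_le_pow_left₀ (add_nonneg hx hy) (add_mul_one_sub_le_inv_mul_exp ht hxt hs.2) n
      _ = (1 + t)⁻¹ ^ n * exp (n * t * s) := by rw [mul_pow, ← exp_nat_mul, mul_assoc]
  have hΓα : 0 < Gamma (α + 1) := Gamma_pos_of_pos (by linarith)
  have hΓδ : 0 < Gamma (α - β) := Gamma_pos_of_pos (by linarith)
  have hΓβ : 0 < Gamma (β + 1) := Gamma_pos_of_pos (by linarith)
  rw [jacobiForm_eq_integral_jacobiForm (γ := β) (by linarith) (by linarith), abs_mul,
    abs_of_pos (by positivity)]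
  calc _ ≤ Gamma (α + 1) / (Gamma (α - β) * Gamma (β + 1)) *
        ((1 + t)⁻¹ ^ n * (Gamma (β + 1) / (α - β - 1 - n * t) ^ (β + 1))) := by
        gcongr
        exact abs_integral_mul_rpow_mul_one_sub_rpow_le (by linarith) (by linarith) hα hform
    _ = Gamma (α + 1) / Gamma (α - β) * (1 + t)⁻¹ ^ n / (α - β - 1 - n * t) ^ (β + 1) := by
        field_simp

theorem jacobi_bound_two_general {α β : ℝ} (hβ : -(1 / 2) ≤ β) {n : ℕ} {θ₀ θ : ℝ} (hθ₀ : 0 ≤ θ₀)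
    (hθ₀' : θ₀ < π / 2) (hα : n * tan θ₀ ^ 2 < α - β - 1) (hθ : θ ∈ Set.Icc θ₀ (π / 2)) :
    |pJacobiCos α β n θ| ≤
      Gamma (α + 1) / Gamma (α - β) * cos θ₀ ^ (2 * n) /
        (α - β - 1 - n * tan θ₀ ^ 2) ^ (β + 1) := by
  have hcos₀ : 0 < cos θ₀ := cos_pos_of_mem_Ioo ⟨by linarith, hθ₀'⟩
  have hcos : 0 ≤ cos θ := cos_nonneg_of_mem_Icc ⟨by linarith [hθ.1], hθ.2⟩
  have hsq : cos θ ^ 2 ≤ (1 + tan θ₀ ^ 2)⁻¹ := by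
    rw [inv_one_add_tan_sq hcos₀.ne']
    exact pow_le_pow_left₀ hcos (cos_le_cos_of_nonneg_of_le_pi hθ₀ (by linarith [hθ.2]) hθ.1) 2
  rw [pJacobiCos_eq_jacobiForm, sin_sq, pow_mul, ← inv_one_add_tan_sq hcos₀.ne']
  exact abs_jacobiForm_one_sub_le hβ (sq_nonneg _) hα (sq_nonneg _) hsq

end

theorem jacobi_bound_two (α β : ℝ) (hβ : 0 ≤ β ∨ β = -(1/2))
    (n : ℕ) (hn : 1 ≤ n) (θ₀ : ℝ) (hθ₀ : 0 < θ₀) (hθ₀' : θ₀ < Real.pi / 2)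
    (hα : (n : ℝ) * Real.tan θ₀ ^ 2 < α - β - 1) :
    ∀ θ ∈ Set.Icc θ₀ (Real.pi / 2),
      |pJacobiCos α β n θ| ≤
        Real.Gamma (α + 1) / Real.Gamma (α - β) *
          Real.cos θ₀ ^ (2 * n) /
            (α - β - 1 - (n : ℝ) * Real.tan θ₀ ^ 2) ^ (β + 1) := fun _ hθ ↦
  jacobi_bound_two_general (by rcases hβ with h | h <;> linarith) hθ₀.le hθ₀' hα hθ
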